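/- Suppose c > 0 and 0 < γ < h. Then lim_{α↓0} α^{1−γ/k}·J₁(α)/J(α) = (c·k!/F^{(k)}(0))^{1/k}, and moreover J(α) → ∞ as α ↓ 0. (The limit (c·k!/F^{(k)}(0))^{1/k} is the unique maximizer s* of the strictly concave function G(s) = μ·c·s − μ·F^{(k)}(0)·s^{k+1}/(k+1)! on (0,∞).) -/

import Mathlib

open Filter Set Topology MeasureTheory

/-- `J(α) = ∫_0^∞ exp{λ(α) ∫_0^x F̄(α u) du - μ x} dx` for the `M/M/1+GI` queue
with `ρ(α) = 1 + c α^γ`, `λ(α) = ρ(α) μ`, patience CDF `x ↦ F(α x)`. -/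
noncomputable def Jq (F : ℝ → ℝ) (μ c γ α : ℝ) : ℝ :=
  ∫ x in Set.Ioi (0 : ℝ),
    Real.exp ((1 + c * α ^ γ) * μ * (∫ u in (0 : ℝ)..x, (1 - F (α * u))) - μ * x)

/-- `J₁(α) = ∫_0^∞ x exp{λ(α) ∫_0^x F̄(α u) du - μ x} dx`. -/
noncomputable def J1q (F : ℝ → ℝ) (μ c γ α : ℝ) : ℝ :=
  ∫ x in Set.Ioi (0 : ℝ),
    x * Real.exp ((1 + c * α ^ γ) * μ * (∫ u in (0 : ℝ)..x, (1 - F (α * u))) - μ * x)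

/-- Concentration of a density proportional to `exp φ` on `(0, ∞)` around a point `p`, when the
derivative of `φ` decreases at rate `η` outside a window of half-width `w` around `p`. -/
lemma integral_abs_sub_mul_exp_le {φ φ' : ℝ → ℝ} {p η w B : ℝ}
    (hφ : ∀ x, HasDerivAt φ (φ' x) x) (hφ' : Continuous φ') (hB : ∀ x, |φ' x| ≤ B)
    (hint : IntegrableOn (fun x => Real.exp (φ x)) (Ioi 0))
    (hint1 : IntegrableOn (fun x => x * Real.exp (φ x)) (Ioi 0))
    (hp : 0 ≤ p)
    (hgap : ∀ x, 0 < x → η * (|x - p| - w) ≤ (x - p) * (φ' p - φ' x)) :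
    IntegrableOn (fun x => |x - p| * Real.exp (φ x)) (Ioi 0) ∧
    (η - |φ' p|) * ∫ x in Ioi (0 : ℝ), |x - p| * Real.exp (φ x) ≤
      (η * w + 1) * ∫ x in Ioi (0 : ℝ), Real.exp (φ x) := by
  have hsub : IntegrableOn (fun x => (x - p) * Real.exp (φ x)) (Ioi 0) := by
    refine (hint1.sub (hint.const_mul p)).congr (Eventually.of_forall fun x => ?_)
    simp only [Pi.sub_apply]
    ring
  have habs : IntegrableOn (fun x => |x - p| * Real.exp (φ x)) (Ioi 0) := by
    refine hsub.norm.congr (Eventually.of_forall fun x => ?_)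
    simp
  refine ⟨habs, ?_⟩
  have hderiv : ∀ x, HasDerivAt (fun x => (x - p) * Real.exp (φ x))
      (Real.exp (φ x) + φ' x * ((x - p) * Real.exp (φ x))) x := by
    intro x
    have h := ((hasDerivAt_id x).sub_const p).mul (hφ x).exp
    refine h.congr_deriv ?_
    simp only [id]
    ring
  have hderiv_int : IntegrableOn
      (fun x => Real.exp (φ x) + φ' x * ((x - p) * Real.exp (φ x))) (Ioi 0) :=
    hint.add (hsub.bdd_mul (c := B) hφ'.aestronglyMeasurable (Eventually.of_forall hB))
  have hlim := tendsto_zero_of_hasDerivAt_of_integrableOn_Ioi (fun x _ => hderiv x)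
    hderiv_int hsub
  have hparts := integral_Ioi_of_hasDerivAt_of_tendsto' (fun x _ => hderiv x) hderiv_int hlim
  have hnonneg : 0 ≤ ∫ x in Ioi (0 : ℝ),
      (Real.exp (φ x) + φ' x * ((x - p) * Real.exp (φ x))) := by
    rw [hparts]
    have := mul_nonneg hp (Real.exp_pos (φ 0)).le
    linarith
  have hle : ∫ x in Ioi (0 : ℝ), (η - |φ' p|) * (|x - p| * Real.exp (φ x)) ≤
      ∫ x in Ioi (0 : ℝ), ((η * w + 1) * Real.exp (φ x) -
        (Real.exp (φ x) + φ' x * ((x - p) * Real.exp (φ x)))) := by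
    refine setIntegral_mono_on (habs.const_mul _) ((hint.const_mul _).sub hderiv_int)
      measurableSet_Ioi fun x hx => ?_
    have h1 := hgap x hx
    have h2 : (x - p) * φ' p ≤ |x - p| * |φ' p| := by
      rw [← abs_mul]
      exact le_abs_self _
    have h3 : (η - |φ' p|) * |x - p| ≤ η * w - φ' x * (x - p) := by linarith
    have h4 := mul_le_mul_of_nonneg_right h3 (Real.exp_pos (φ x)).le
    linarith
  rw [integral_sub (hint.const_mul _) hderiv_int, integral_const_mul, integral_const_mul] at hle
  linarith

/-- Under the hypotheses of `integral_abs_sub_mul_exp_le`, the mean of the density proportional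
to `exp φ` is close to `p`. -/
lemma abs_mean_sub_le {φ φ' : ℝ → ℝ} {p η w B : ℝ}
    (hφ : ∀ x, HasDerivAt φ (φ' x) x) (hφ' : Continuous φ') (hB : ∀ x, |φ' x| ≤ B)
    (hint : IntegrableOn (fun x => Real.exp (φ x)) (Ioi 0))
    (hint1 : IntegrableOn (fun x => x * Real.exp (φ x)) (Ioi 0))
    (hp : 0 ≤ p)
    (hgap : ∀ x, 0 < x → η * (|x - p| - w) ≤ (x - p) * (φ' p - φ' x))
    (hη : |φ' p| < η) :
    |(∫ x in Ioi (0 : ℝ), x * Real.exp (φ x)) / (∫ x in Ioi (0 : ℝ), Real.exp (φ x)) - p| ≤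
      (η * w + 1) / (η - |φ' p|) := by
  obtain ⟨habs, hle⟩ := integral_abs_sub_mul_exp_le hφ hφ' hB hint hint1 hp hgap
  have hJ : 0 < ∫ x in Ioi (0 : ℝ), Real.exp (φ x) := by
    refine (setIntegral_pos_iff_support_of_nonneg_ae
      (Eventually.of_forall fun x => (Real.exp_pos _).le) hint).2 ?_
    have hsupp : Function.support (fun x => Real.exp (φ x)) = univ := by
      ext x
      simp [Real.exp_ne_zero]
    simp [hsupp]
  have hcenter : (∫ x in Ioi (0 : ℝ), x * Real.exp (φ x)) -
      p * (∫ x in Ioi (0 : ℝ), Real.exp (φ x)) =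
      ∫ x in Ioi (0 : ℝ), (x - p) * Real.exp (φ x) := by
    rw [← integral_const_mul, ← integral_sub hint1 (hint.const_mul p)]
    simp only [sub_mul]
  have hbound : |∫ x in Ioi (0 : ℝ), (x - p) * Real.exp (φ x)| ≤
      ∫ x in Ioi (0 : ℝ), |x - p| * Real.exp (φ x) := by
    refine (abs_integral_le_integral_abs).trans_eq ?_
    simp only [abs_mul, Real.abs_exp]
  have hgap_pos : 0 < η - |φ' p| := sub_pos.2 hη
  rw [div_sub' hJ.ne', mul_comm _ p, hcenter, abs_div, abs_of_pos hJ,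
    div_le_div_iff₀ hJ hgap_pos]
  calc _ ≤ (∫ x in Ioi (0 : ℝ), |x - p| * Real.exp (φ x)) * (η - |φ' p|) := by gcongr
    _ ≤ _ := by linarith

/-- The leading Taylor coefficient of a function whose derivatives of order `< k` vanish at `0`. -/
lemma tendsto_div_pow_of_iteratedDerivWithin_eq_zero {F : ℝ → ℝ} {k : ℕ}
    (hF : ContDiffOn ℝ k F (Ici 0))
    (hderivs : ∀ j < k, iteratedDerivWithin j F (Ici 0) 0 = 0) :
    Tendsto (fun x => F x / x ^ k) (𝓝[>] 0)
      (𝓝 (iteratedDerivWithin k F (Ici 0) 0 / k.factorial)) := by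
  have h := (taylor_tendsto (convex_Ici (0 : ℝ)) self_mem_Ici hF).mono_left
    (nhdsWithin_mono 0 Ioi_subset_Ici_self)
  have h' := h.add_const (iteratedDerivWithin k F (Ici 0) 0 / k.factorial)
  rw [zero_add] at h'
  refine h'.congr' ?_
  filter_upwards [self_mem_nhdsWithin] with x hx
  have hx : x ≠ 0 := ne_of_gt hx
  have hsum : taylorWithinEval F k (Ici 0) 0 x =
      x ^ k * (iteratedDerivWithin k F (Ici 0) 0 / k.factorial) := by
    rw [taylor_within_apply, Finset.sum_range_succ, Finset.sum_eq_zero]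
    · simp only [sub_zero, smul_eq_mul, zero_add]
      ring
    · intro j hj
      rw [hderivs j (Finset.mem_range.1 hj), smul_zero]
  rw [hsum, sub_zero, smul_eq_mul]
  field_simp
  ring

/-- A monotone function with increments at least `δ` over the two windows of width `ε` around `s`
satisfies a quantitative monotonicity estimate, also after rescaling the argument by `b`. -/
lemma Monotone.mul_sub_le_sub_mul_sub {F : ℝ → ℝ} (hF : Monotone F) {b t s ε δ x : ℝ}
    (hb : 0 < b) (ht : 0 < t) (hδ : 0 ≤ δ) (hε : 0 ≤ ε)
    (hright : δ ≤ F (t * (s + ε)) - F (t * s)) (hleft : δ ≤ F (t * s) - F (t * (s - ε))) :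
    δ * (|x - s / b| - ε / b) ≤ (x - s / b) * (F (b * t * x) - F (t * s)) := by
  have hbx : b * (x - s / b) = b * x - s := by field_simp
  have key : δ * (|b * x - s| - ε) ≤ (b * x - s) * (F (b * t * x) - F (t * s)) := by
    have harg : b * t * x = t * (b * x) := by ring
    rw [harg]
    generalize b * x = y
    have hbelow : y ≤ s → F (t * y) ≤ F (t * s) := fun h => hF (by gcongr)
    have habove : s ≤ y → F (t * s) ≤ F (t * y) := fun h => hF (by gcongr)
    rcases le_or_gt (|y - s|) ε with h | h
    · have h1 : 0 ≤ (y - s) * (F (t * y) - F (t * s)) := by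
        rcases le_total y s with h2 | h2
        · exact mul_nonneg_of_nonpos_of_nonpos (by linarith) (by linarith [hbelow h2])
        · exact mul_nonneg (by linarith) (by linarith [habove h2])
      exact (mul_nonpos_of_nonneg_of_nonpos hδ (by linarith)).trans h1
    · rcases le_total y s with h2 | h2
      · rw [abs_of_nonpos (by linarith)] at h ⊢
        have h3 : F (t * y) ≤ F (t * (s - ε)) := hF (by gcongr; linarith)
        have hδε := mul_nonneg hδ hε
        nlinarith
      · rw [abs_of_nonneg (by linarith)] at h ⊢
        have h3 : F (t * (s + ε)) ≤ F (t * y) := hF (by gcongr; linarith)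
        have hδε := mul_nonneg hδ hε
        nlinarith
  have habs : |b * x - s| = b * |x - s / b| := by
    rw [← hbx, abs_mul, abs_of_pos hb]
  rw [habs, ← hbx] at key
  refine le_of_mul_le_mul_left ?_ hb
  have : b * (ε / b) = ε := by field_simp
  calc b * (δ * (|x - s / b| - ε / b)) = δ * (b * |x - s / b| - b * (ε / b)) := by ring
    _ ≤ _ := by
      rw [this]
      linarith

lemma hasDerivAt_mul_integral_sub_mul {f : ℝ → ℝ} (hf : Continuous f) (L μ x : ℝ) :
    HasDerivAt (fun x => L * (∫ u in (0 : ℝ)..x, f u) - μ * x) (L * f x - μ) x := by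
  have h := ((hf.integral_hasStrictDerivAt 0 x).hasDerivAt.const_mul L).sub
    ((hasDerivAt_id x).const_mul μ)
  exact h.congr_deriv (by rw [mul_one])

/-- in the overloaded regime (`c > 0`, `0 < γ < h = k/(k+1)`),
`α^{1-γ/k} J₁(α)/J(α) → (c k!/F^{(k)}(0))^{1/k}` (the unique maximizer of the
strictly concave function `G(s) = μ c s - μ F^{(k)}(0) s^{k+1}/(k+1)!`), and
`J(α) → ∞` as `α ↓ 0`. -/
theorem mm1gi_J_limits_overloaded
    (k : ℕ) (hk : 1 ≤ k)
    (F : ℝ → ℝ)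
    (hF_mono : Monotone F)
    (hF_zero : ∀ x ≤ (0 : ℝ), F x = 0)
    (hF_range : ∀ x, 0 ≤ x → 0 ≤ F x ∧ F x < 1)
    (hF_lim : Tendsto F atTop (𝓝 1))
    (hF_smooth : ContDiffOn ℝ k F (Set.Ici 0))
    (hF_derivs : ∀ j < k, iteratedDerivWithin j F (Set.Ici 0) 0 = 0)
    (hF_k : 0 < iteratedDerivWithin k F (Set.Ici 0) 0)
    (μ γ c : ℝ) (hμ : 0 < μ) (hγ : 0 < γ)
    (hc : 0 < c) (hγh : γ < (k : ℝ) / (k + 1))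
    (hJ : ∀ᶠ α in 𝓝[>] (0 : ℝ), IntegrableOn
      (fun x : ℝ => Real.exp ((1 + c * α ^ γ) * μ *
        (∫ u in (0 : ℝ)..x, (1 - F (α * u))) - μ * x)) (Set.Ioi 0))
    (hJ1 : ∀ᶠ α in 𝓝[>] (0 : ℝ), IntegrableOn
      (fun x : ℝ => x * Real.exp ((1 + c * α ^ γ) * μ *
        (∫ u in (0 : ℝ)..x, (1 - F (α * u))) - μ * x)) (Set.Ioi 0)) :
    Tendsto (fun α : ℝ => α ^ (1 - γ / (k : ℝ)) * (J1q F μ c γ α / Jq F μ c γ α))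
      (𝓝[>] (0 : ℝ))
      (𝓝 ((c * (Nat.factorial k) / iteratedDerivWithin k F (Set.Ici 0) 0)
        ^ ((1 : ℝ) / (k : ℝ)))) ∧
    Tendsto (fun α : ℝ => Jq F μ c γ α) (𝓝[>] (0 : ℝ)) atTop := by
  have hk0 : (0 : ℝ) < k := by exact_mod_cast hk
  have hF_cont : Continuous F := by
    rw [← continuousOn_univ, ← Iic_union_Ici (a := (0 : ℝ))]
    refine ContinuousOn.union_of_isClosed ?_ hF_smooth.continuousOn isClosed_Iic isClosed_Ici
    exact continuousOn_const.congr fun x hx => hF_zero x hx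
  have hF_nonneg : ∀ x, 0 ≤ F x := fun x => by
    rcases le_total x 0 with hx | hx
    · exact (hF_zero x hx).ge
    · exact (hF_range x hx).1
  have hF_le : ∀ x, F x ≤ 1 := fun x => by
    rcases le_total x 0 with hx | hx
    · rw [hF_zero x hx]
      exact zero_le_one
    · exact (hF_range x hx).2.le
  set A := iteratedDerivWithin k F (Ici 0) 0 with hA
  have hfact : (0 : ℝ) < k.factorial := by exact_mod_cast k.factorial_pos
  set a : ℝ := A / k.factorial with ha
  have ha0 : 0 < a := div_pos hF_k hfact
  set s : ℝ := (c * k.factorial / A) ^ ((1 : ℝ) / (k : ℝ)) with hs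
  have hs0 : 0 < s := Real.rpow_pos_of_pos (by positivity) _
  have hsk : a * s ^ k = c := by
    rw [hs, one_div, Real.rpow_inv_natCast_pow (by positivity) (by omega), ha]
    field_simp
  have hγk : 0 < γ / k := div_pos hγ hk0
  have hγ_lt : γ * (k + 1) < k := by rwa [lt_div_iff₀ (by positivity)] at hγh
  have hexp : 0 < 1 - γ / k - γ := by
    have : 1 - γ / k - γ = (k - γ * (k + 1)) / k := by
      field_simp
      ring
    rw [this]
    exact div_pos (by linarith) hk0
  have hrpow : ∀ r : ℝ, 0 < r → Tendsto (fun α : ℝ => α ^ r) (𝓝[>] 0) (𝓝 0) := by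
    intro r hr
    have h := (Real.continuousAt_rpow_const 0 r (Or.inr hr.le)).tendsto
    rw [Real.zero_rpow hr.ne'] at h
    exact h.mono_left nhdsWithin_le_nhds
  have hpos : ∀ᶠ α in 𝓝[>] (0 : ℝ), 0 < α := self_mem_nhdsWithin
  have hscale : ∀ v : ℝ, 0 < v → Tendsto (fun α : ℝ => F (α ^ (γ / k) * v) / α ^ γ)
      (𝓝[>] 0) (𝓝 (a * v ^ k)) := by
    intro v hv
    have hto : Tendsto (fun α : ℝ => α ^ (γ / k) * v) (𝓝[>] 0) (𝓝[>] 0) := by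
      refine tendsto_nhdsWithin_iff.2 ⟨?_, ?_⟩
      · simpa using (hrpow _ hγk).mul_const v
      · filter_upwards [hpos] with α hα
        exact mul_pos (Real.rpow_pos_of_pos hα _) hv
    have h := ((tendsto_div_pow_of_iteratedDerivWithin_eq_zero hF_smooth hF_derivs).comp
      hto).mul_const (v ^ k)
    refine h.congr' ?_
    filter_upwards [hpos] with α hα
    have htk : (α ^ (γ / k)) ^ k = α ^ γ := by
      rw [← Real.rpow_natCast, ← Real.rpow_mul hα.le]
      congr 1
      field_simp
    have hαγ := Real.rpow_pos_of_pos hα γ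
    simp only [Function.comp, mul_pow, htk]
    field_simp
  have hρ : Tendsto (fun α : ℝ => 1 + c * α ^ γ) (𝓝[>] 0) (𝓝 1) := by
    simpa using ((hrpow γ hγ).const_mul c).const_add 1
  have hdrift : ∀ v : ℝ, 0 < v → Tendsto
      (fun α : ℝ => c - (1 + c * α ^ γ) * (F (α ^ (γ / k) * v) / α ^ γ))
      (𝓝[>] 0) (𝓝 (c - a * v ^ k)) := by
    intro v hv
    simpa using (hρ.mul (hscale v hv)).const_sub c
  have hbt : ∀ α : ℝ, 0 < α → α ^ (1 - γ / k) * α ^ (γ / k) = α := by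
    intro α hα
    rw [← Real.rpow_add hα]
    simp
  have hratio : Tendsto (fun α : ℝ => α ^ (1 - γ / k) / α ^ γ) (𝓝[>] 0) (𝓝 0) := by
    refine (hrpow _ hexp).congr' ?_
    filter_upwards [hpos] with α hα
    rw [← Real.rpow_sub hα]
  have hcontα : ∀ α : ℝ, Continuous fun u => 1 - F (α * u) := fun α => by fun_prop
  constructor
  · rw [Metric.tendsto_nhds]
    intro e he
    obtain ⟨ε, hε, hεe, hεs⟩ : ∃ ε : ℝ, 0 < ε ∧ 4 * ε ≤ e ∧ ε < s :=
      ⟨min (e / 4) (s / 2), by positivity, by linarith [min_le_left (e / 4) (s / 2)],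
        by linarith [min_le_right (e / 4) (s / 2)]⟩
    have hr : 0 < a * (s + ε) ^ k - a * s ^ k := by
      rw [← mul_sub]
      exact mul_pos ha0 (sub_pos.2 (pow_lt_pow_left₀ (by linarith) hs0.le (by omega)))
    have hl : 0 < a * s ^ k - a * (s - ε) ^ k := by
      rw [← mul_sub]
      exact mul_pos ha0 (sub_pos.2 (pow_lt_pow_left₀ (by linarith) (by linarith) (by omega)))
    obtain ⟨δ, hδ, hδ'⟩ := exists_between (lt_min hr hl)
    have hd := hdrift s hs0
    rw [hsk, sub_self] at hd
    have hd' := hd.abs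
    rw [abs_zero] at hd'
    filter_upwards [hJ, hJ1, hpos,
      ((hscale (s + ε) (by linarith)).sub (hscale s hs0)).eventually_const_lt
        (hδ'.trans_le (min_le_left _ _)),
      ((hscale s hs0).sub (hscale (s - ε) (by linarith))).eventually_const_lt
        (hδ'.trans_le (min_le_right _ _)),
      hd'.eventually_lt_const (half_pos hδ),
      hratio.eventually_lt_const (show 0 < μ * δ * ε / 2 by positivity)]
      with α hint hint1 hα hright hleft hdα hbα
    have hαγ := Real.rpow_pos_of_pos hα γ
    have hb := Real.rpow_pos_of_pos hα (1 - γ / k)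
    have ht := Real.rpow_pos_of_pos hα (γ / k)
    have hbt' := hbt α hα
    set y : ℝ := α ^ γ
    set b : ℝ := α ^ (1 - γ / k)
    set t : ℝ := α ^ (γ / k)
    rw [← sub_div, lt_div_iff₀ hαγ] at hright hleft
    rw [div_lt_iff₀ hαγ] at hbα
    have hL : μ ≤ (1 + c * y) * μ := by nlinarith [mul_pos (mul_pos hc hαγ) hμ]
    set L : ℝ := (1 + c * y) * μ with hLdef
    have hL0 : 0 < L := hμ.trans_le hL
    have hαp : α * (s / b) = t * s := by
      rw [← hbt']
      field_simp
    set φ' : ℝ → ℝ := fun x => L * (1 - F (α * x)) - μ with hφ'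
    have hφ'p : φ' (s / b) = μ * y * (c - (1 + c * y) * (F (t * s) / y)) := by
      simp only [hφ', hαp, hLdef]
      field_simp
      ring
    have habs : |φ' (s / b)| < μ * y * (δ / 2) := by
      rw [hφ'p, abs_mul, abs_of_pos (by positivity : 0 < μ * y)]
      gcongr
    have hη : μ * y * δ ≤ L * (δ * y) := by
      have := mul_le_mul_of_nonneg_right hL (mul_pos hδ hαγ).le
      linarith
    have hgap : ∀ x, 0 < x →
        L * (δ * y) * (|x - s / b| - ε / b) ≤ (x - s / b) * (φ' (s / b) - φ' x) := by
      intro x _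
      have h := hF_mono.mul_sub_le_sub_mul_sub (x := x) hb ht (mul_pos hδ hαγ).le hε.le
        hright.le hleft.le
      rw [hbt'] at h
      have h' := mul_le_mul_of_nonneg_left h hL0.le
      simp only [hφ', hαp]
      linarith
    have hmean := abs_mean_sub_le (p := s / b) (η := L * (δ * y)) (w := ε / b) (B := L + μ)
      (φ := fun x => L * (∫ u in (0 : ℝ)..x, (1 - F (α * u))) - μ * x) (φ' := φ')
      (hasDerivAt_mul_integral_sub_mul (hcontα α) L μ)
      (((hcontα α).const_mul L).sub continuous_const)
      (fun x => by
        have h0 := hF_nonneg (α * x)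
        have h1 := hF_le (α * x)
        have h2 := mul_nonneg hL0.le h0
        have h3 := mul_le_mul_of_nonneg_left h1 hL0.le
        rw [abs_le]
        constructor <;> simp only [hφ'] <;> linarith)
      hint hint1 (by positivity) hgap (by linarith [mul_pos (mul_pos hμ hαγ) hδ])
    have hden : L * (δ * y) / 2 ≤ L * (δ * y) - |φ' (s / b)| := by linarith
    have hηpos : 0 < L * (δ * y) := by positivity
    have hfinal : b * ((L * (δ * y) * (ε / b) + 1) / (L * (δ * y) - |φ' (s / b)|)) ≤ 3 * ε := by
      have h1 : b * (L * (δ * y) * (ε / b) + 1) = L * (δ * y) * ε + b := by field_simp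
      rw [← mul_div_assoc, h1, div_le_iff₀ (by linarith)]
      have h2 := mul_le_mul_of_nonneg_left hden (by positivity : 0 ≤ 3 * ε)
      have h3 := mul_le_mul_of_nonneg_right hη hε.le
      linarith
    rw [Real.dist_eq]
    have hbs : b * (J1q F μ c γ α / Jq F μ c γ α) - s =
        b * (J1q F μ c γ α / Jq F μ c γ α - s / b) := by field_simp
    rw [hbs, abs_mul, abs_of_pos hb]
    calc b * |J1q F μ c γ α / Jq F μ c γ α - s / b|
        ≤ b * ((L * (δ * y) * (ε / b) + 1) / (L * (δ * y) - |φ' (s / b)|)) :=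
          mul_le_mul_of_nonneg_left hmean hb.le
      _ ≤ 3 * ε := hfinal
      _ < e := by linarith
  · have hs2 : 0 < c - a * (s / 2) ^ k := by
      rw [← hsk, ← mul_sub]
      exact mul_pos ha0 (sub_pos.2 (pow_lt_pow_left₀ (by linarith) (by linarith) (by omega)))
    have hb0 : Tendsto (fun α : ℝ => s / 2 / α ^ (1 - γ / k)) (𝓝[>] 0) atTop := by
      have h : Tendsto (fun α : ℝ => α ^ (1 - γ / k)) (𝓝[>] 0) (𝓝[>] 0) := by
        refine tendsto_nhdsWithin_iff.2 ⟨hrpow _ (by linarith), ?_⟩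
        filter_upwards [hpos] with α hα
        exact Real.rpow_pos_of_pos hα _
      simp only [div_eq_mul_inv _ (_ ^ _)]
      exact (tendsto_inv_nhdsGT_zero.comp h).const_mul_atTop (by positivity)
    refine tendsto_atTop_mono' _ ?_ hb0
    filter_upwards [hJ, hpos, (hdrift (s / 2) (by positivity)).eventually_const_lt hs2]
      with α hint hα hdα
    have hαγ := Real.rpow_pos_of_pos hα γ
    have hb := Real.rpow_pos_of_pos hα (1 - γ / k)
    have hbt' := hbt α hα
    set y : ℝ := α ^ γ
    set b : ℝ := α ^ (1 - γ / k)
    set t : ℝ := α ^ (γ / k)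
    have hρ1 : 1 ≤ (1 + c * y) * (1 - F (t * (s / 2))) := by
      have h := mul_pos hαγ hdα
      have h' : y * (c - (1 + c * y) * (F (t * (s / 2)) / y)) =
          (1 + c * y) * (1 - F (t * (s / 2))) - 1 := by
        field_simp
        ring
      linarith
    have hone : ∀ x ∈ Ioc 0 (s / 2 / b), (1 : ℝ) ≤ Real.exp ((1 + c * y) * μ *
        (∫ u in (0 : ℝ)..x, (1 - F (α * u))) - μ * x) := by
      intro x hx
      rw [Real.one_le_exp_iff]
      have hint_ge : x * (1 - F (t * (s / 2))) ≤ ∫ u in (0 : ℝ)..x, (1 - F (α * u)) := by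
        have h := intervalIntegral.integral_mono_on (μ := volume) hx.1.le
          (intervalIntegrable_const (c := 1 - F (t * (s / 2))))
          ((hcontα α).intervalIntegrable 0 x) (fun u hu => by
            have : α * u ≤ t * (s / 2) := by
              calc α * u ≤ α * (s / 2 / b) :=
                    mul_le_mul_of_nonneg_left (hu.2.trans hx.2) hα.le
                _ = t * (s / 2) := by
                    rw [← hbt']
                    field_simp
            linarith [hF_mono this])
        rwa [intervalIntegral.integral_const, sub_zero, smul_eq_mul] at h
      have h1 := mul_le_mul_of_nonneg_left hint_ge
        (by positivity : 0 ≤ (1 + c * y) * μ)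
      have h2 := mul_le_mul_of_nonneg_left hρ1 (mul_pos hμ hx.1).le
      linarith
    have hw : 0 ≤ s / 2 / b := by positivity
    calc s / 2 / b = ∫ _ in Ioc 0 (s / 2 / b), (1 : ℝ) := by simp [hw]
      _ ≤ ∫ x in Ioc 0 (s / 2 / b), Real.exp ((1 + c * y) * μ *
            (∫ u in (0 : ℝ)..x, (1 - F (α * u))) - μ * x) :=
          setIntegral_mono_on (by simp) (hint.mono_set Ioc_subset_Ioi_self)
            measurableSet_Ioc hone
      _ ≤ Jq F μ c γ α :=
          setIntegral_mono_set hint (Eventually.of_forall fun x => (Real.exp_pos _).le)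
            Ioc_subset_Ioi_self.eventuallyLE
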